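/- The cycle graph C₅ is a grounded square-L graph: there exist functions a, h from the five vertices of C₅ to ℝ, with h v > 0 for every vertex v, such that for all distinct vertices u, v the shapes Λ(a u, h u, h u) and Λ(a v, h v, h v) have nonempty intersection if and only if u and v are adjacent in C₅. -/

import Mathlib

/-- The grounded L-shape with foot `(a, 0)`, height `h` and horizontal arm length `w`:
`({a} × [0, h]) ∪ ([a, a + w] × {h})`. -/
def Lshape (a h w : ℝ) : Set (ℝ × ℝ) :=
  ({a} ×ˢ Set.Icc 0 h) ∪ (Set.Icc a (a + w) ×ˢ {h})

/-- The cycle graph `C₅` on `Fin 5`: `v` is adjacent to `v + 1` (indices mod 5). -/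
def C5 : SimpleGraph (Fin 5) :=
  SimpleGraph.fromRel (fun u v => v = u + 1)

theorem Lshape_inter_iff {a h a' h' : ℝ} (hh' : 0 < h') (hh : 0 < h) (haa : a < a') :
    (Lshape a h h ∩ Lshape a' h' h').Nonempty ↔ h ≤ h' ∧ a' ≤ a + h := by
  constructor
  · rintro ⟨⟨x, y⟩, h1, h2⟩
    simp only [Lshape, Set.mem_union, Set.mem_prod, Set.mem_singleton_iff, Set.mem_Icc] at h1 h2
    rcases h1 with ⟨h1, h3, h4⟩ | ⟨⟨h1, h3⟩, h4⟩ <;>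
    rcases h2 with ⟨h2, h5, h6⟩ | ⟨⟨h2, h5⟩, h6⟩ <;> constructor <;> linarith
  · rintro ⟨h1, h2⟩
    refine ⟨(a', h), Or.inr ⟨⟨haa.le, h2⟩, rfl⟩, Or.inl ⟨rfl, hh.le, h1⟩⟩

theorem Lshape_inter_iff_symm {a h a' h' : ℝ} (hh' : 0 < h') (hh : 0 < h) (haa : a < a') :
    (Lshape a' h' h' ∩ Lshape a h h).Nonempty ↔ h ≤ h' ∧ a' ≤ a + h := by
  rw [Set.inter_comm]
  exact Lshape_inter_iff hh' hh haa

theorem C5_is_grounded_square_L_graph :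
    ∃ a h : Fin 5 → ℝ,
      (∀ v, 0 < h v) ∧
      ∀ u v : Fin 5, u ≠ v →
        ((Lshape (a u) (h u) (h u) ∩ Lshape (a v) (h v) (h v)).Nonempty ↔ C5.Adj u v) := by
  refine ⟨![7, 10, 3, 2, 5], ![7, 14, 12, 3, 4], ?_, ?_⟩
  · intro v
    fin_cases v <;> norm_num
  · intro u v huv
    fin_cases u <;> fin_cases v <;> first
      | exact absurd rfl huv
      | (refine (Lshape_inter_iff ?_ ?_ ?_).trans ?_ <;> simp [C5, Fin.ext_iff, Fin.val_add] <;> norm_num; done)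
      | (refine (Lshape_inter_iff_symm ?_ ?_ ?_).trans ?_ <;> simp [C5, Fin.ext_iff, Fin.val_add] <;> norm_num; done)
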